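/- Assume λ_1 = 0. Let 1 ≤ K ≤ T be integers and let P* ∈ P(R) satisfy the K-slot window constraints Σ_{k=s}^{s+K-1} ( E_{P*}[C(·, b^k)] − v ) ≤ 0 for every integer s with 0 ≤ s ≤ T − K. Then the iterates of Algorithm 1 satisfy the K-benchmark regret bound Σ_{t=1}^{T} ( E_{P^t}[C_R] − E_{P*}[C_R] ) ≤ μ (2Θ + v)² (K−1)(2K−1)/6 + (T − K) ( (1/2) K μ (4Θ² + v²) + (α/2)|R|Θ² ) + K(K−1)Θ + 2KΘ + 1/α. -/

import Mathlib

open Finset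

/-!
The proof combines the proximal inequality of each primal step with a drift inequality for the
multiplier. With `h t` the one-step regret, `g t` the constraint value of the comparator,
`M = max (2Θ) v` a bound on all constraint values, and the potential
`L t = λ_{t+1}² / (2μ) + ‖P* - P^t‖² / (2α)`, they give
`h t ≤ λ_{t+1} g t + μ M² / 2 + L t - L (t+1)`.

Summing over the `T - K` windows `{s, …, s+K-1}` with `s < T - K`, the potential telescopes along
every fixed offset inside the window. The multiplier moves by at most `μ M` per step, so inside a
window it can be frozen at its initial value at cost `j μ M²` for offset `j`; the frozen sum is
nonpositive by the window constraint (`window_sum_le`). Every offset covers all but `K` of the `T`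
slots, and each missed slot costs at most `Θ` (`sum_le_shifted_sum`). Dividing by `K` yields the
bound (`window_regret`), with `∑_{j<K} j²` coming from `λ_{j+1} ≤ j μ M`.
-/

/-- The three-point inequality for a proximal step, along a single segment: `p` minimizes
`ℓ + κ ‖· - z‖²` on the segment from `p` to `q`, where `ℓ` is affine with end values `lp`, `lq`. -/
lemma prox_three_point {E : Type*} [NormedAddCommGroup E] [InnerProductSpace ℝ E]
    (p q z : E) (lp lq κ : ℝ) (hκ : 0 ≤ κ)
    (H : ∀ ε : ℝ, 0 ≤ ε → ε ≤ 1 →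
      lp + κ * ‖p - z‖^2 ≤ lp + ε * (lq - lp) + κ * ‖(p - z) + ε • (q - p)‖^2) :
    lp + κ * ‖p - z‖^2 + κ * ‖q - p‖^2 ≤ lq + κ * ‖q - z‖^2 := by
  have hexp : ∀ ε : ℝ, ‖(p - z) + ε • (q - p)‖^2 =
      ‖p - z‖^2 + 2 * ε * inner ℝ (p - z) (q - p) + ε^2 * ‖q - p‖^2 := by
    intro ε
    rw [norm_add_sq_real, inner_smul_right, norm_smul, mul_pow, Real.norm_eq_abs, sq_abs]
    ring
  have hq : ‖q - z‖^2 = ‖p - z‖^2 + 2 * inner ℝ (p - z) (q - p) + ‖q - p‖^2 := by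
    have h1 := hexp 1
    rw [one_smul, show p - z + (q - p) = q - z by abel] at h1
    rw [h1]; ring
  set I : ℝ := inner ℝ (p - z) (q - p)
  set A : ℝ := lq - lp + 2 * κ * I with hA
  set B : ℝ := κ * ‖q - p‖^2 with hB
  have hB0 : 0 ≤ B := by positivity
  have hquad : ∀ ε : ℝ, 0 ≤ ε → ε ≤ 1 → 0 ≤ ε * (A + ε * B) := by
    intro ε h0 h1
    have := H ε h0 h1
    rw [hexp] at this
    rw [hA, hB]
    linarith
  -- The first-order term is nonnegative: otherwise `ε = -A / (B - A)` violates minimality.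
  have hA0 : 0 ≤ A := by
    by_contra hneg
    push Not at hneg
    have hBA : 0 < B - A := by linarith
    have h0 : 0 < -A / (B - A) := div_pos (by linarith) hBA
    have h1 : -A / (B - A) ≤ 1 := by rw [div_le_one hBA]; linarith
    have h2 := hquad _ h0.le h1
    have h3 : A + -A / (B - A) * B = -(A^2 / (B - A)) := by field_simp; ring
    have h4 : 0 < A^2 / (B - A) := div_pos (by nlinarith) hBA
    rw [h3] at h2
    nlinarith
  rw [hq]
  linarith

lemma simplex_dist_sq_le {R : Type*} [Fintype R] (p q : EuclideanSpace ℝ R)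
    (hp : (∀ a, 0 ≤ p a) ∧ ∑ a, p a = 1) (hq : (∀ a, 0 ≤ q a) ∧ ∑ a, q a = 1) :
    ‖p - q‖^2 ≤ 2 := by
  rw [EuclideanSpace.real_norm_sq_eq]
  have hle : ∀ r : EuclideanSpace ℝ R, ((∀ a, 0 ≤ r a) ∧ ∑ a, r a = 1) → ∀ a, r a ≤ 1 := by
    intro r hr a
    rw [← hr.2]
    exact Finset.single_le_sum (f := fun a => r a) (fun i _ => hr.1 i) (Finset.mem_univ a)
  calc ∑ a, ((p - q) a)^2 ≤ ∑ a, (p a + q a) := by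
        refine Finset.sum_le_sum fun a _ => ?_
        have h1 := hle p hp a
        have h2 := hle q hq a
        have h3 := hp.1 a
        have h4 := hq.1 a
        rw [PiLp.sub_apply]
        nlinarith [mul_nonneg h3 h4]
    _ = 2 := by rw [Finset.sum_add_distrib, hp.2, hq.2]; norm_num

lemma expect_mem {R : Type*} [Fintype R] (p : EuclideanSpace ℝ R) (f : R → ℝ) (B : ℝ)
    (hp : (∀ a, 0 ≤ p a) ∧ ∑ a, p a = 1) (hf : ∀ a, 0 ≤ f a ∧ f a ≤ B) :
    0 ≤ ∑ a, p a * f a ∧ ∑ a, p a * f a ≤ B := by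
  constructor
  · exact Finset.sum_nonneg fun a _ => mul_nonneg (hp.1 a) (hf a).1
  · calc ∑ a, p a * f a ≤ ∑ a, p a * B :=
          Finset.sum_le_sum fun a _ => mul_le_mul_of_nonneg_left (hf a).2 (hp.1 a)
      _ = B := by rw [← Finset.sum_mul, hp.2, one_mul]

lemma sum_le_shifted_sum (h : ℕ → ℝ) (Θ : ℝ) (hh : ∀ t, h t ≤ Θ) (N K j : ℕ) (hj : j ≤ K) :
    ∑ t ∈ range (N + K), h t ≤ ∑ s ∈ range N, h (s + j) + K * Θ := by
  obtain ⟨i, rfl⟩ := Nat.exists_eq_add_of_le hj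
  have hbd : ∀ (n : ℕ) (u : ℕ → ℝ), (∀ t, u t ≤ Θ) → ∑ t ∈ range n, u t ≤ n * Θ := by
    intro n u hu
    have := Finset.sum_le_card_nsmul (range n) u Θ (fun t _ => hu t)
    simpa using this
  rw [show N + (j + i) = j + (N + i) by ring, Finset.sum_range_add, Finset.sum_range_add]
  have h1 := hbd j h hh
  have h2 := hbd i (fun x => h (j + (N + x))) (fun _ => hh _)
  have h3 : ∑ x ∈ range N, h (j + x) = ∑ x ∈ range N, h (x + j) :=
    Finset.sum_congr rfl fun x _ => by rw [add_comm]
  push_cast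
  linarith

lemma sum_range_cast (K : ℕ) : ∑ j ∈ range K, (j : ℝ) = K * (K - 1) / 2 := by
  induction K with
  | zero => simp
  | succ n ih => rw [Finset.sum_range_succ, ih]; push_cast; ring

lemma sum_range_cast_sq (K : ℕ) :
    ∑ j ∈ range K, (j : ℝ)^2 = K * (K - 1) * (2 * K - 1) / 6 := by
  induction K with
  | zero => simp
  | succ n ih => rw [Finset.sum_range_succ, ih]; push_cast; ring

/-- Over a window where `g` sums to a nonpositive value, a slowly varying nonnegative weight `lam`
may be frozen at its initial value. -/
lemma window_sum_le (g lam : ℕ → ℝ) (M μ : ℝ) (hM : 0 ≤ M) (hμ : 0 ≤ μ) (K s : ℕ)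
    (hg : ∀ t, |g t| ≤ M) (hlam0 : ∀ t, 0 ≤ lam t)
    (hdrift : ∀ s j : ℕ, |lam (s + j) - lam s| ≤ j * (μ * M))
    (hwin : ∑ j ∈ range K, g (s + j) ≤ 0) :
    ∑ j ∈ range K, lam (s + j) * g (s + j) ≤ μ * M^2 * (K * (K - 1) / 2) := by
  calc ∑ j ∈ range K, lam (s + j) * g (s + j)
      ≤ ∑ j ∈ range K, (lam s * g (s + j) + μ * M^2 * j) := by
        refine Finset.sum_le_sum fun j _ => ?_
        have h1 : (lam (s + j) - lam s) * g (s + j) ≤ (j * (μ * M)) * M := by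
          refine (le_abs_self _).trans ?_
          rw [abs_mul]
          exact mul_le_mul (hdrift s j) (hg _) (abs_nonneg _) (by positivity)
        nlinarith
    _ = lam s * ∑ j ∈ range K, g (s + j) + μ * M^2 * (K * (K - 1) / 2) := by
        rw [Finset.sum_add_distrib, ← Finset.mul_sum, ← Finset.mul_sum, sum_range_cast]
    _ ≤ _ := by nlinarith [mul_nonneg (hlam0 s) (neg_nonneg.2 hwin)]

/-- The averaged regret bound for abstract real sequences: `h` is the one-step regret, `g` the
comparator's constraint value, `lam` the multiplier and `L` the potential. -/
lemma window_regret (h g lam L : ℕ → ℝ) (M μ Θ : ℝ) (hM : 0 ≤ M) (hμ : 0 ≤ μ) (K N : ℕ)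
    (hh : ∀ t, h t ≤ Θ) (hg : ∀ t, |g t| ≤ M) (hlam0 : ∀ t, 0 ≤ lam t)
    (hdrift : ∀ s j : ℕ, |lam (s + j) - lam s| ≤ j * (μ * M))
    (hL : ∀ t, 0 ≤ L t)
    (hstep : ∀ t, h t ≤ lam t * g t + μ * M^2 / 2 + L t - L (t + 1))
    (hwin : ∀ s, s < N → ∑ j ∈ range K, g (s + j) ≤ 0) :
    K * ∑ t ∈ range (N + K), h t ≤
      K * (N * (K * μ * M^2 / 2)) + ∑ j ∈ range K, L j + K * (K * Θ) := by
  have hj : ∀ j ∈ range K, ∑ t ∈ range (N + K), h t ≤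
      ∑ s ∈ range N, lam (s + j) * g (s + j) + N * (μ * M^2 / 2) + L j + K * Θ := by
    intro j hj
    refine (sum_le_shifted_sum h Θ hh N K j (Finset.mem_range.1 hj).le).trans ?_
    have h1 : ∑ s ∈ range N, h (s + j) ≤ ∑ s ∈ range N,
        (lam (s + j) * g (s + j) + μ * M^2 / 2 + (L (s + j) - L (s + 1 + j))) := by
      refine Finset.sum_le_sum fun s _ => ?_
      have := hstep (s + j)
      rw [show s + j + 1 = s + 1 + j by ring] at this
      linarith
    rw [Finset.sum_add_distrib, Finset.sum_add_distrib,
      Finset.sum_range_sub' (fun s => L (s + j)), Finset.sum_const, Finset.card_range,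
      nsmul_eq_mul, zero_add] at h1
    have := hL (N + j)
    linarith
  have hsum := Finset.sum_le_sum hj
  simp only [Finset.sum_add_distrib, Finset.sum_const, Finset.card_range, nsmul_eq_mul] at hsum
  rw [Finset.sum_comm] at hsum
  have hw : ∑ s ∈ range N, ∑ j ∈ range K, lam (s + j) * g (s + j) ≤
      ∑ s ∈ range N, μ * M^2 * ((K:ℝ) * (K - 1) / 2) :=
    Finset.sum_le_sum fun s hs =>
      window_sum_le g lam M μ hM hμ K s hg hlam0 hdrift (hwin s (Finset.mem_range.1 hs))
  rw [Finset.sum_const, Finset.card_range, nsmul_eq_mul] at hw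
  linarith

theorem stmt9
    {R : Type*} [Fintype R] [Nonempty R]
    (CR : R → ℝ) (CV CT : R → R → ℝ) (Θ v α μ : ℝ)
    (hΘ : 0 < Θ) (hv : 0 < v) (hα : 0 < α) (hμ : 0 < μ)
    (hCR : ∀ a : R, 0 ≤ CR a ∧ CR a ≤ Θ)
    (hCV : ∀ a c : R, 0 ≤ CV a c ∧ CV a c ≤ Θ)
    (hCT : ∀ a c : R, 0 ≤ CT a c ∧ CT a c ≤ Θ)
    (b : ℕ → R) (P : ℕ → EuclideanSpace ℝ R) (lam : ℕ → ℝ)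
    (hP0 : (∀ a : R, 0 ≤ P 0 a) ∧ ∑ a : R, P 0 a = 1)
    (hlam1 : lam 1 = 0)
    (hPmem : ∀ t : ℕ, 1 ≤ t → (∀ a : R, 0 ≤ P t a) ∧ ∑ a : R, P t a = 1)
    (hPmin : ∀ t : ℕ, 1 ≤ t → ∀ Q : EuclideanSpace ℝ R,
      ((∀ a : R, 0 ≤ Q a) ∧ ∑ a : R, Q a = 1) →
      (∑ a : R, P t a * CR a) +
        lam t * ((∑ a : R, P t a * (CV a (b (t-1)) + CT a (b (t-1)))) - v) +
        (1/(2*α)) * ‖P t - P (t-1)‖^2 ≤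
      (∑ a : R, Q a * CR a) +
        lam t * ((∑ a : R, Q a * (CV a (b (t-1)) + CT a (b (t-1)))) - v) +
        (1/(2*α)) * ‖Q - P (t-1)‖^2)
    (hlam : ∀ t : ℕ, 1 ≤ t →
      lam (t+1) = max 0 (lam t + μ * ((∑ a : R, P t a * (CV a (b (t-1)) + CT a (b (t-1)))) - v)))
    (K T : ℕ) (hK : 1 ≤ K) (hKT : K ≤ T)
    (Pstar : EuclideanSpace ℝ R)
    (hPstar : (∀ a : R, 0 ≤ Pstar a) ∧ ∑ a : R, Pstar a = 1)
    (hwin : ∀ s : ℕ, s ≤ T - K →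
      ∑ k ∈ Finset.Icc s (s + K - 1),
        ((∑ a : R, Pstar a * (CV a (b k) + CT a (b k))) - v) ≤ 0) :
    ∑ t ∈ Finset.Icc 1 T, ((∑ a : R, P t a * CR a) - (∑ a : R, Pstar a * CR a)) ≤
      μ * (2*Θ + v)^2 * ((K:ℝ) - 1) * (2*(K:ℝ) - 1) / 6 +
      ((T:ℝ) - (K:ℝ)) * ((1/2) * (K:ℝ) * μ * (4*Θ^2 + v^2) + (α/2) * (Fintype.card R : ℝ) * Θ^2) +
      (K:ℝ) * ((K:ℝ) - 1) * Θ + 2*(K:ℝ)*Θ + 1/α := by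
  set f : EuclideanSpace ℝ R → ℝ := fun Q => ∑ a : R, Q a * CR a with hf
  set c : ℕ → EuclideanSpace ℝ R → ℝ :=
    fun t Q => (∑ a : R, Q a * (CV a (b t) + CT a (b t))) - v with hc
  set M : ℝ := max (2 * Θ) v with hMdef
  have hM2 : 2 * Θ ≤ M := le_max_left _ _
  have hMv : v ≤ M := le_max_right _ _
  have hM0 : 0 ≤ M := by linarith
  have hMsq : M^2 ≤ 4 * Θ^2 + v^2 := by
    rcases max_choice (2 * Θ) v with h | h <;> rw [hMdef, h] <;> nlinarith
  have hMsq' : M^2 ≤ (2 * Θ + v)^2 := by nlinarith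
  have hmem : ∀ t, (∀ a : R, 0 ≤ P t a) ∧ ∑ a : R, P t a = 1 := by
    intro t
    rcases Nat.eq_zero_or_pos t with rfl | ht
    · exact hP0
    · exact hPmem t ht
  have hcbd : ∀ t Q, ((∀ a : R, 0 ≤ Q a) ∧ ∑ a : R, Q a = 1) → |c t Q| ≤ M := by
    intro t Q hQ
    have := expect_mem Q (fun a => CV a (b t) + CT a (b t)) (2 * Θ) hQ (fun a =>
      ⟨add_nonneg (hCV a _).1 (hCT a _).1, by linarith [(hCV a (b t)).2, (hCT a (b t)).2]⟩)
    rw [abs_le]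
    simp only [hc]
    constructor <;> linarith [this.1, this.2]
  have hfbd : ∀ Q, ((∀ a : R, 0 ≤ Q a) ∧ ∑ a : R, Q a = 1) → 0 ≤ f Q ∧ f Q ≤ Θ :=
    fun Q hQ => expect_mem Q CR Θ hQ hCR
  -- The multiplier is reindexed from `0`: `l t = λ_{t+1}` is the weight of the constraint `c t`.
  set l : ℕ → ℝ := fun t => lam (t + 1) with hl
  have hl0' : l 0 = 0 := hlam1
  have hlsucc : ∀ t, l (t + 1) = max 0 (l t + μ * c t (P (t + 1))) := by
    intro t
    have := hlam (t + 1) (by omega)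
    simpa using this
  have hl0 : ∀ t, 0 ≤ l t := by
    intro t
    cases t with
    | zero => exact hl0'.ge
    | succ n => rw [hlsucc]; exact le_max_left _ _
  have hG : ∀ t, |c t (P (t + 1))| ≤ M := fun t => hcbd t _ (hmem _)
  have hl1 : ∀ t, |l (t + 1) - l t| ≤ μ * M := by
    intro t
    have h1 := abs_le.1 (hG t)
    have h2 := hl0 t
    have h3 : μ * c t (P (t + 1)) ≤ μ * M := mul_le_mul_of_nonneg_left h1.2 hμ.le
    have h4 : μ * (-M) ≤ μ * c t (P (t + 1)) := mul_le_mul_of_nonneg_left h1.1 hμ.le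
    have h5 : 0 ≤ μ * M := by positivity
    rw [hlsucc, abs_le]
    constructor
    · linarith [le_max_right 0 (l t + μ * c t (P (t + 1)))]
    · have : max 0 (l t + μ * c t (P (t + 1))) ≤ l t + μ * M :=
        max_le (by linarith) (by linarith)
      linarith
  have hdrift : ∀ s j : ℕ, |l (s + j) - l s| ≤ j * (μ * M) := by
    intro s j
    induction j with
    | zero => simp
    | succ n ih =>
      have h1 := hl1 (s + n)
      have h2 := abs_sub_le (l (s + n + 1)) (l (s + n)) (l s)
      rw [← add_assoc]
      push_cast
      linarith
  have hprox : ∀ t, f (P (t + 1)) + l t * c t (P (t + 1)) +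
      (1/(2*α)) * ‖P (t + 1) - P t‖^2 + (1/(2*α)) * ‖Pstar - P (t + 1)‖^2 ≤
      f Pstar + l t * c t Pstar + (1/(2*α)) * ‖Pstar - P t‖^2 := by
    intro t
    refine prox_three_point (P (t + 1)) Pstar (P t) (f (P (t + 1)) + l t * c t (P (t + 1)))
      (f Pstar + l t * c t Pstar) (1/(2*α)) (by positivity) ?_
    intro ε h0 h1
    have hlin : ∀ w : R → ℝ, ∑ a, (P (t + 1) + ε • (Pstar - P (t + 1))) a * w a =
        ∑ a, P (t + 1) a * w a + ε * (∑ a, Pstar a * w a - ∑ a, P (t + 1) a * w a) := by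
      intro w
      rw [← Finset.sum_sub_distrib, Finset.mul_sum, ← Finset.sum_add_distrib]
      refine Finset.sum_congr rfl fun a _ => ?_
      simp only [PiLp.add_apply, PiLp.smul_apply, PiLp.sub_apply, smul_eq_mul]
      ring
    have hQ : (∀ a, 0 ≤ (P (t + 1) + ε • (Pstar - P (t + 1))) a) ∧
        ∑ a, (P (t + 1) + ε • (Pstar - P (t + 1))) a = 1 := by
      constructor
      · intro a
        simp only [PiLp.add_apply, PiLp.smul_apply, PiLp.sub_apply, smul_eq_mul]
        nlinarith [mul_nonneg h0 (hPstar.1 a), mul_nonneg (sub_nonneg.2 h1) ((hmem (t+1)).1 a)]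
      · have := hlin (fun _ => 1)
        simp only [mul_one, hPstar.2, (hmem (t+1)).2] at this
        linarith
    have := hPmin (t + 1) (by omega) _ hQ
    rw [hlin, hlin, Nat.add_sub_cancel,
      show P (t + 1) + ε • (Pstar - P (t + 1)) - P t =
        P (t + 1) - P t + ε • (Pstar - P (t + 1)) by abel] at this
    simp only [hf, hc, hl]
    linarith
  set L : ℕ → ℝ := fun t => (l t)^2 / (2 * μ) + (1/(2*α)) * ‖Pstar - P t‖^2 with hL
  have hstep : ∀ t, f (P (t + 1)) - f Pstar ≤
      l t * c t Pstar + μ * M^2 / 2 + L t - L (t + 1) := by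
    intro t
    have h1 := hprox t
    have h2 : (l (t + 1))^2 ≤ (l t + μ * c t (P (t + 1)))^2 := by
      rw [hlsucc]
      rcases max_choice 0 (l t + μ * c t (P (t + 1))) with h | h <;> rw [h]
      nlinarith [sq_nonneg (l t + μ * c t (P (t + 1)))]
    have h3 : (c t (P (t + 1)))^2 ≤ M^2 := sq_le_sq' (abs_le.1 (hG t)).1 (abs_le.1 (hG t)).2
    have h4 : (l (t + 1))^2 / (2 * μ) ≤
        (l t)^2 / (2 * μ) + l t * c t (P (t + 1)) + μ * M^2 / 2 := by
      rw [div_le_iff₀ (by positivity)]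
      have h5 : ((l t)^2 / (2 * μ) + l t * c t (P (t + 1)) + μ * M^2 / 2) * (2 * μ) =
          (l t)^2 + 2 * μ * (l t * c t (P (t + 1))) + μ^2 * M^2 := by field_simp
      rw [h5]
      nlinarith [mul_le_mul_of_nonneg_left h3 (sq_nonneg μ)]
    have h6 : 0 ≤ (1/(2*α)) * ‖P (t + 1) - P t‖^2 := by positivity
    simp only [hL]
    linarith
  obtain ⟨N, rfl⟩ := Nat.exists_eq_add_of_le' hKT
  have hwin' : ∀ s, s < N → ∑ j ∈ range K, c (s + j) Pstar ≤ 0 := by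
    intro s hs
    have := hwin s (by omega)
    rw [show Finset.Icc s (s + K - 1) = Finset.Ico s (s + K) by ext; simp; omega,
      Finset.sum_Ico_eq_sum_range, Nat.add_sub_cancel_left] at this
    exact this
  have hLsum : ∑ j ∈ range K, L j ≤ K * (μ * M^2 * ((K - 1) * (2 * K - 1) / 12) + 1 / α) := by
    calc ∑ j ∈ range K, L j ≤ ∑ j ∈ range K, (μ * M^2 / 2 * (j:ℝ)^2 + 1 / α) := by
          refine Finset.sum_le_sum fun j _ => ?_
          have h1 := (abs_le.1 (hdrift 0 j)).2
          rw [zero_add, hl0', sub_zero] at h1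
          have h2 : (l j)^2 ≤ (j * (μ * M))^2 := pow_le_pow_left₀ (hl0 j) h1 2
          have h3 : (l j)^2 / (2 * μ) ≤ μ * M^2 / 2 * (j:ℝ)^2 := by
            rw [div_le_iff₀ (by positivity)]
            linarith
          have h4 : (1/(2*α)) * ‖Pstar - P j‖^2 ≤ (1/(2*α)) * 2 :=
            mul_le_mul_of_nonneg_left (simplex_dist_sq_le _ _ hPstar (hmem j)) (by positivity)
          have h5 : (1/(2*α)) * 2 = 1 / α := by field_simp
          simp only [hL]
          linarith
      _ = _ := by
          rw [Finset.sum_add_distrib, ← Finset.mul_sum, sum_range_cast_sq, Finset.sum_const,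
            Finset.card_range, nsmul_eq_mul]
          ring
  have hmain := window_regret (fun t => f (P (t + 1)) - f Pstar) (fun t => c t Pstar) l L M μ Θ
    hM0 hμ.le K N (fun t => by linarith [(hfbd _ (hmem (t+1))).2, (hfbd _ hPstar).1])
    (fun t => hcbd t _ hPstar) hl0 hdrift (fun t => by simp only [hL]; positivity) hstep hwin'
  have hK1 : (1:ℝ) ≤ K := by exact_mod_cast hK
  have hN0 : (0:ℝ) ≤ N := Nat.cast_nonneg N
  have hbound : ∑ t ∈ range (N + K), (f (P (t + 1)) - f Pstar) ≤
      N * (K * μ * M^2 / 2) + (μ * M^2 * ((K - 1) * (2 * K - 1) / 12) + 1 / α) + K * Θ := by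
    refine le_of_mul_le_mul_left ?_ (show (0:ℝ) < K by linarith)
    linarith
  rw [show Finset.Icc 1 (N + K) = Finset.Ico 1 (1 + (N + K)) by ext; simp; omega,
    Finset.sum_Ico_eq_sum_range, Nat.add_sub_cancel_left]
  simp only [add_comm 1]
  refine hbound.trans ?_
  have hpoly : 0 ≤ ((K:ℝ) - 1) * (2 * K - 1) := mul_nonneg (by linarith) (by linarith)
  have e1 : (N:ℝ) * (K * μ * M^2 / 2) ≤ N * ((1/2) * K * μ * (4 * Θ^2 + v^2)) := by
    have := mul_le_mul_of_nonneg_left hMsq (show 0 ≤ (N:ℝ) * (K * μ / 2) by positivity)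
    linarith
  have e2 : 0 ≤ (N:ℝ) * ((α/2) * (Fintype.card R : ℝ) * Θ^2) := by positivity
  have e3 : μ * M^2 * (((K:ℝ) - 1) * (2 * K - 1) / 12) ≤
      μ * (2 * Θ + v)^2 * (K - 1) * (2 * K - 1) / 6 := by
    have h1 := mul_le_mul_of_nonneg_right hMsq' (mul_nonneg hμ.le hpoly)
    have h2 : 0 ≤ (2 * Θ + v)^2 * (μ * (((K:ℝ) - 1) * (2 * K - 1))) :=
      mul_nonneg (sq_nonneg _) (mul_nonneg hμ.le hpoly)
    linarith
  have e4 : 0 ≤ (K:ℝ) * (K - 1) * Θ :=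
    mul_nonneg (mul_nonneg (by linarith) (by linarith)) hΘ.le
  have e5 : 0 ≤ (K:ℝ) * Θ := by positivity
  push_cast
  linarith
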